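/- Let d ≥ 3 and let (a,w,b) ∈ 𝒯 be such that w has exactly two left extensions and exactly two right extensions in u_d. Let w′ be the offspring of w and let s be the longest common suffix of φ(a) and φ(d−1). If r is a return word to w in u_d, then s·φ(r) has s as a suffix and the word s·φ(r)·s^{−1} (i.e., the word r′ with r′s = sφ(r)) is a return word to w′ in u_d; in particular, the Parikh vector of this return word to w′ equals M r⃗, where r⃗ is the Parikh vector of r and M is the incidence matrix of φ_d. -/

import Mathlib

namespace RichRT

variable {A : Type*}

/-- The word `w` occurs in the sequence `u` at position `j`. -/
def OccursAt (w : List A) (u : ℕ → A) (j : ℕ) : Prop :=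
  w = (List.range w.length).map fun t => u (j + t)

/-- `w` is a factor of the infinite sequence `u`. -/
def IsFactorS (w : List A) (u : ℕ → A) : Prop :=
  ∃ j : ℕ, OccursAt w u j

/-- `u` is recurrent: every factor occurs infinitely often. -/
def Recurrent (u : ℕ → A) : Prop :=
  ∀ w : List A, IsFactorS w u → ∀ N : ℕ, ∃ j, N ≤ j ∧ OccursAt w u j

/-- The number of distinct palindromic factors of a finite word. -/
noncomputable def palCount (w : List A) : ℕ :=
  Set.ncard {p : List A | p <:+: w ∧ p.reverse = p}

/-- A finite word of length `n` is rich if it has exactly `n+1` palindromic factors. -/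
def RichWord (w : List A) : Prop := palCount w = w.length + 1

/-- A sequence is rich if all its factors are rich. -/
def RichSeq (u : ℕ → A) : Prop := ∀ w : List A, IsFactorS w u → RichWord w

/-- The prefix of length `k` of the periodic sequence `vvv⋯`. -/
def powPref (v : List A) (k : ℕ) : List A := ((List.replicate k v).flatten).take k

/-- The set of exponents `k/|v|` of fractional powers `v^(k/|v|)` occurring in `u`,
with `|v| ≥ n`. -/
def expSet (u : ℕ → A) (n : ℕ) : Set ℝ :=
  {x | ∃ (v : List A) (k : ℕ), v ≠ [] ∧ n ≤ v.length ∧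
    IsFactorS (powPref v k) u ∧ x = (k : ℝ) / (v.length : ℝ)}

/-- The critical exponent of a sequence, with values in `EReal`. -/
noncomputable def critExp (u : ℕ → A) : EReal :=
  sSup ((fun x : ℝ => (x : EReal)) '' expSet u 0)

/-- The asymptotic critical exponent of a sequence: `⊤` if the critical exponent is `⊤`,
otherwise the limit (= infimum, by monotonicity) over `n` of the suprema of exponents of
powers `v^e` with `|v| ≥ n`. -/
noncomputable def acritExp (u : ℕ → A) : EReal :=
  if critExp u = ⊤ then ⊤
  else ⨅ n : ℕ, sSup ((fun x : ℝ => (x : EReal)) '' expSet u n)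

/-- The morphism `φ_d` on letters: `i ↦ 0(i+1)` for `i < d-1`, `d-1 ↦ 0(d-1)(d-1)`. -/
def phiL (d : ℕ) (i : ℕ) : List ℕ :=
  if i < d - 1 then [0, i + 1] else [0, d - 1, d - 1]

/-- The morphism `φ_d` on words. -/
def phiW (d : ℕ) (w : List ℕ) : List ℕ := w.flatMap (phiL d)

/-- `u` is the fixed point of `φ_d`: it begins with `0` and `φ_d(u) = u`, i.e. the image
of every prefix of `u` is again a prefix of `u`. -/
def IsPhiFixed (d : ℕ) (u : ℕ → ℕ) : Prop :=
  u 0 = 0 ∧ ∀ m : ℕ, OccursAt (phiW d ((List.range m).map u)) u 0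

/-- Left extensions of `w` in `u`. -/
def Lext (u : ℕ → ℕ) (w : List ℕ) : Set (List ℕ) :=
  {x | ∃ i : ℕ, x = i :: w ∧ IsFactorS x u}

/-- Right extensions of `w` in `u`. -/
def Rext (u : ℕ → ℕ) (w : List ℕ) : Set (List ℕ) :=
  {x | ∃ i : ℕ, x = w ++ [i] ∧ IsFactorS x u}

/-- Both-sided extensions of `w` in `u`. -/
def Bext (u : ℕ → ℕ) (w : List ℕ) : Set (List ℕ) :=
  {x | ∃ i j : ℕ, x = i :: (w ++ [j]) ∧ IsFactorS x u}

/-- `w` is a bispecial factor of `u`. -/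
def Bispecial (u : ℕ → ℕ) (w : List ℕ) : Prop :=
  IsFactorS w u ∧ 2 ≤ (Lext u w).ncard ∧ 2 ≤ (Rext u w).ncard

/-- The bilateral order `b(w) = #Bext(w) − #Lext(w) − #Rext(w) + 1`. -/
noncomputable def bord (u : ℕ → ℕ) (w : List ℕ) : ℤ :=
  ((Bext u w).ncard : ℤ) - ((Lext u w).ncard : ℤ) - ((Rext u w).ncard : ℤ) + 1

/-- The palindromes `F_0 = ε`, `F_i = φ(F_{i-1})0`. -/
def Fword (d : ℕ) : ℕ → List ℕ
  | 0 => []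
  | i + 1 => phiW d (Fword d i) ++ [0]

/-- Membership in the set `𝒯` of bispecial triplets. -/
def TripleMem (d : ℕ) (u : ℕ → ℕ) (t : ℕ × List ℕ × ℕ) : Prop :=
  Bispecial u t.2.1 ∧ t.1 < d - 1 ∧ t.2.2 < d - 1 ∧
    IsFactorS (t.1 :: t.2.1) u ∧ IsFactorS (t.2.1 ++ [t.2.2]) u

/-- The map `f` on triplets. -/
def fmap (d : ℕ) (t : ℕ × List ℕ × ℕ) : ℕ × List ℕ × ℕ :=
  ((t.1 + 1) % (d - 1),
   (if t.1 = d - 2 then [d - 1] else []) ++ phiW d t.2.1 ++ [0] ++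
     (if t.2.2 = d - 2 then [d - 1] else []),
   (t.2.2 + 1) % (d - 1))

/-- The initial triplets `T_k = (0, ε, k)` for `k ≤ d-2` and `T_{d-1} = (0, d-1, 0)`. -/
def Tinit (d k : ℕ) : ℕ × List ℕ × ℕ :=
  if k = d - 1 then (0, [d - 1], 0) else (0, ([] : List ℕ), k)

/-- The Parikh vector of a word. -/
def parikh (d : ℕ) (w : List ℕ) : Fin d → ℕ := fun i => w.count (i : ℕ)

/-- The incidence matrix of `φ_d`. -/
def Mmat (d : ℕ) : Matrix (Fin d) (Fin d) ℕ := fun i j => (phiL d (j : ℕ)).count (i : ℕ)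

/-- `r` is a return word to `w` in `u`. -/
def ReturnWord (u : ℕ → ℕ) (w r : List ℕ) : Prop :=
  ∃ j ℓ : ℕ, j < ℓ ∧ OccursAt w u j ∧ OccursAt w u ℓ ∧
    (∀ m, j < m → m < ℓ → ¬ OccursAt w u m) ∧
    r = (List.range (ℓ - j)).map fun t => u (j + t)

/-- `R` is a complete return word to `w` in `u`. -/
def CompleteReturn (u : ℕ → ℕ) (w R : List ℕ) : Prop :=
  ∃ r : List ℕ, ReturnWord u w r ∧ R = r ++ w

/-!
Since `φ(u) = u`, the sequence `u` is cut into the blocks `φ(u_k)`, and the letter `0` occurs in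
each of them exactly at the start. Hence the occurrences of `φ(w)0` are exactly the images of the
occurrences of `w`.

If two distinct letters precede `w`, so does `d - 1`: desubstituting repeatedly moves the two
occurrences towards the origin until one of them is preceded by `d - 1` or their right
continuations differ at once. As the language of `u` is closed under reversal (its prefixes
`Fword d n` are palindromes), the same holds on the right. So only `a` and `d - 1` precede `w`, and
only `b` and `d - 1` follow it. This forces `s` before and the tail of the offspring after every
`φ(w)`, except before an occurrence of `w` at position `0`, which recurrence allows us to avoid.
Consecutive occurrences of `w` are therefore mapped to consecutive occurrences of `w'`, each
shifted to the left by `|s|`.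
-/

section Words

variable {u : ℕ → A} {v w : List A} {i j : ℕ}

/-- The factor `u_j u_{j+1} ⋯ u_{j+n-1}` of `u`; `OccursAt w u j` unfolds to
`w = window u j w.length`. -/
def window (u : ℕ → A) (j n : ℕ) : List A := (List.range n).map fun t => u (j + t)

@[simp]
theorem length_window (u : ℕ → A) (j n : ℕ) : (window u j n).length = n := by
  simp [window]

theorem occursAt_window (u : ℕ → A) (j n : ℕ) : OccursAt (window u j n) u j := by
  simp [OccursAt, window]

theorem occursAt_iff_getElem :
    OccursAt w u j ↔ ∀ (t : ℕ) (h : t < w.length), w[t] = u (j + t) := by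
  simp [OccursAt, List.ext_getElem_iff]

@[simp]
theorem occursAt_nil (u : ℕ → A) (j : ℕ) : OccursAt [] u j := by
  simp [OccursAt]

@[simp]
theorem occursAt_cons {x : A} : OccursAt (x :: w) u j ↔ u j = x ∧ OccursAt w u (j + 1) := by
  simp [OccursAt, List.range_succ_eq_map, Function.comp_def, eq_comm, add_assoc, add_comm 1]

theorem occursAt_append :
    OccursAt (v ++ w) u j ↔ OccursAt v u j ∧ OccursAt w u (j + v.length) := by
  induction v generalizing j with
  | nil => simp
  | cons x v ih => simp [ih, and_assoc, add_assoc, add_comm 1]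

theorem OccursAt.congr (h : OccursAt w u i) (hij : ∀ t < w.length, u (j + t) = u (i + t)) :
    OccursAt w u j := by
  rw [occursAt_iff_getElem] at h ⊢
  exact fun t ht => (h t ht).trans (hij t ht).symm

theorem OccursAt.apply_add_eq (hi : OccursAt w u i) (hj : OccursAt w u j) {t : ℕ}
    (ht : t < w.length) : u (i + t) = u (j + t) := by
  rw [← occursAt_iff_getElem.1 hi t ht, occursAt_iff_getElem.1 hj t ht]

theorem OccursAt.eq_of_length_eq (hv : OccursAt v u j) (hw : OccursAt w u j)
    (h : v.length = w.length) : v = w := by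
  rw [OccursAt] at hv hw
  rw [hv, hw, h]

theorem OccursAt.of_prefix (h : OccursAt w u j) (hvw : v <+: w) : OccursAt v u j := by
  obtain ⟨t, rfl⟩ := hvw
  exact (occursAt_append.1 h).1

theorem IsFactorS.of_infix (h : IsFactorS w u) (hvw : v <:+: w) : IsFactorS v u := by
  obtain ⟨x, y, rfl⟩ := hvw
  obtain ⟨j, hj⟩ := h
  exact ⟨_, (occursAt_append.1 (occursAt_append.1 hj).1).2⟩

theorem OccursAt.isInfix_of_occursAt_zero (h : OccursAt w u j) (hv : OccursAt v u 0)
    (hlen : j + w.length ≤ v.length) : w <:+: v := by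
  have hw : w = (v.drop j).take w.length := by
    refine List.ext_getElem (by simp; omega) fun t ht _ => ?_
    rw [List.getElem_take, List.getElem_drop, occursAt_iff_getElem.1 h t ht,
      occursAt_iff_getElem.1 hv, zero_add]
  rw [hw]
  exact (List.take_prefix _ _).isInfix.trans (List.drop_suffix _ _).isInfix

end Words

section Returns

/-- `j < ℓ` are two consecutive occurrences of `w` in `u`. -/
structure Consecutive (u : ℕ → A) (w : List A) (j ℓ : ℕ) : Prop where
  lt : j < ℓ
  left : OccursAt w u j
  right : OccursAt w u ℓ
  not_between : ∀ m, j < m → m < ℓ → ¬ OccursAt w u m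

variable {u : ℕ → ℕ} {w r : List ℕ} {j ℓ p : ℕ}

theorem returnWord_iff :
    ReturnWord u w r ↔ ∃ j ℓ, Consecutive u w j ℓ ∧ r = window u j (ℓ - j) :=
  ⟨fun ⟨j, ℓ, h₁, h₂, h₃, h₄, h₅⟩ => ⟨j, ℓ, ⟨h₁, h₂, h₃, h₄⟩, h₅⟩,
    fun ⟨j, ℓ, ⟨h₁, h₂, h₃, h₄⟩, h₅⟩ => ⟨j, ℓ, h₁, h₂, h₃, h₄, h₅⟩⟩

theorem Consecutive.shift (h : Consecutive u w j ℓ)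
    (hp : ∀ t < ℓ + w.length, u (p + t) = u t) : Consecutive u w (p + j) (p + ℓ) where
  lt := by simpa using h.lt
  left := h.left.congr fun t ht => by rw [add_assoc, hp _ (by have := h.lt; omega)]
  right := h.right.congr fun t ht => by rw [add_assoc, hp _ (by omega)]
  not_between m hm hmℓ hw := by
    obtain ⟨m, rfl⟩ := Nat.exists_eq_add_of_le (show p ≤ m by omega)
    exact h.not_between m (by omega) (by omega)
      (hw.congr fun t ht => by rw [add_assoc, hp _ (by omega)])

end Returns

section Morphism

variable {d : ℕ} {w : List ℕ}

theorem phiL_of_lt {x : ℕ} (hx : x < d - 1) : phiL d x = [0, x + 1] := if_pos hx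

theorem phiL_of_not_lt {x : ℕ} (hx : ¬ x < d - 1) : phiL d x = [0, d - 1, d - 1] := if_neg hx

@[simp]
theorem phiW_nil (d : ℕ) : phiW d [] = [] := rfl

@[simp]
theorem phiW_cons (d x : ℕ) (w : List ℕ) : phiW d (x :: w) = phiL d x ++ phiW d w := rfl

@[simp]
theorem phiW_append (d : ℕ) (v w : List ℕ) : phiW d (v ++ w) = phiW d v ++ phiW d w :=
  List.flatMap_append

theorem zero_prefix_phiW_append_zero (d : ℕ) (w : List ℕ) : [0] <+: phiW d w ++ [0] := by
  cases w with
  | nil => exact List.prefix_rfl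
  | cons x w =>
    by_cases hx : x < d - 1
    · simp [phiL_of_lt hx]
    · simp [phiL_of_not_lt hx]

theorem reverse_phiW_append_zero (d : ℕ) (w : List ℕ) :
    (phiW d w ++ [0]).reverse = phiW d w.reverse ++ [0] := by
  induction w with
  | nil => rfl
  | cons x w ih =>
    rw [phiW_cons, List.append_assoc, List.reverse_append, ih, List.reverse_cons, phiW_append]
    by_cases hx : x < d - 1
    · simp [phiL_of_lt hx]
    · simp [phiL_of_not_lt hx]

theorem length_le_length_phiW (d : ℕ) (w : List ℕ) : w.length ≤ (phiW d w).length := by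
  induction w with
  | nil => simp
  | cons x w ih =>
    have hx : 1 ≤ (phiL d x).length := by unfold phiL; split_ifs <;> simp
    simp only [phiW_cons, List.length_append, List.length_cons]
    omega

theorem parikh_phiW (hw : ∀ x ∈ w, x < d) :
    parikh d (phiW d w) = (Mmat d).mulVec (parikh d w) := by
  induction w with
  | nil => funext i; simp [Matrix.mulVec, dotProduct, parikh]
  | cons x w ih =>
    have hx : x < d := hw x (by simp)
    have hcons : parikh d (x :: w) = Pi.single ⟨x, hx⟩ 1 + parikh d w := by
      funext i
      simp [parikh, List.count_cons, Pi.single_apply, Fin.ext_iff, add_comm, eq_comm (a := x)]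
    rw [hcons, Matrix.mulVec_add, ← ih fun y hy => hw y (by simp [hy])]
    funext i
    simp [parikh, Mmat]

theorem parikh_eq_of_perm {v : List ℕ} (h : v.Perm w) : parikh d v = parikh d w :=
  funext fun i => h.count_eq i

end Morphism

section Blocks

variable {d : ℕ} {u : ℕ → ℕ} {w : List ℕ} {j k n x : ℕ}

/-- The position in `u = φ(u)` at which the image `φ(u_k)` of the `k`-th letter starts. -/
def blockStart (d : ℕ) (u : ℕ → ℕ) (k : ℕ) : ℕ := (phiW d (window u 0 k)).length

theorem blockStart_zero (d : ℕ) (u : ℕ → ℕ) : blockStart d u 0 = 0 := rfl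

theorem window_zero_add (u : ℕ → ℕ) (k n : ℕ) :
    window u 0 (k + n) = window u 0 k ++ window u k n := by
  simp [window, List.range_add, Function.comp_def]

theorem OccursAt.blockStart_add_length (h : OccursAt w u k) :
    blockStart d u (k + w.length) = blockStart d u k + (phiW d w).length := by
  rw [blockStart, window_zero_add, phiW_append, List.length_append, ← blockStart]
  exact congrArg (fun v => blockStart d u k + (phiW d v).length) (Eq.symm h)

theorem blockStart_succ (d : ℕ) (u : ℕ → ℕ) (k : ℕ) :
    blockStart d u (k + 1) = blockStart d u k + (phiL d (u k)).length := by
  simpa [window] using (occursAt_window u k 1).blockStart_add_length (d := d)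

theorem blockStart_succ_eq_ite (d : ℕ) (u : ℕ → ℕ) (k : ℕ) :
    blockStart d u (k + 1) = blockStart d u k + if u k < d - 1 then 2 else 3 := by
  rw [blockStart_succ, phiL]
  split_ifs <;> rfl

theorem strictMono_blockStart (d : ℕ) (u : ℕ → ℕ) : StrictMono (blockStart d u) :=
  strictMono_nat_of_lt_succ fun k => by
    rw [blockStart_succ_eq_ite]
    split_ifs <;> omega

theorem two_mul_le_blockStart (d : ℕ) (u : ℕ → ℕ) (k : ℕ) : 2 * k ≤ blockStart d u k := by
  induction k with
  | zero => simp
  | succ k ih =>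
    rw [blockStart_succ_eq_ite]
    split_ifs <;> omega

theorem exists_eq_blockStart_add (d : ℕ) (u : ℕ → ℕ) (n : ℕ) :
    ∃ k, n = blockStart d u k ∨ n = blockStart d u k + 1 ∨
      (n = blockStart d u k + 2 ∧ ¬ u k < d - 1) := by
  induction n with
  | zero => exact ⟨0, .inl rfl⟩
  | succ n ih =>
    obtain ⟨k, h⟩ := ih
    have hsucc := blockStart_succ_eq_ite d u k
    by_cases hend : n + 1 = blockStart d u (k + 1)
    · exact ⟨k + 1, .inl hend⟩
    · refine ⟨k, ?_⟩
      split_ifs at hsucc <;> omega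

namespace IsPhiFixed

theorem occursAt_phiW (hu : IsPhiFixed d u) (h : OccursAt w u k) :
    OccursAt (phiW d w) u (blockStart d u k) := by
  have himage := hu.2 (k + w.length)
  have hsplit : (List.range (k + w.length)).map u = window u 0 k ++ w := by
    conv_rhs => rw [h]
    rw [← window, ← window_zero_add]
    simp [window]
  rw [hsplit, phiW_append, occursAt_append] at himage
  simpa [blockStart] using himage.2

theorem occursAt_phiL (hu : IsPhiFixed d u) (k : ℕ) :
    OccursAt (phiL d (u k)) u (blockStart d u k) := by
  simpa using hu.occursAt_phiW (w := [u k]) (k := k) (by simp)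

theorem apply_blockStart (hu : IsPhiFixed d u) (k : ℕ) : u (blockStart d u k) = 0 := by
  have h := hu.occursAt_phiL k
  unfold phiL at h
  split_ifs at h <;> exact (occursAt_cons.1 h).1

theorem apply_blockStart_add_one (hu : IsPhiFixed d u) (k : ℕ) :
    u (blockStart d u k + 1) = min (u k + 1) (d - 1) := by
  have h := hu.occursAt_phiL k
  unfold phiL at h
  split_ifs at h <;> simp only [occursAt_cons] at h <;> omega

theorem apply_blockStart_add_two (hu : IsPhiFixed d u) (k : ℕ) :
    u (blockStart d u k + 2) = if u k < d - 1 then 0 else d - 1 := by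
  split_ifs with hk
  · rw [← hu.apply_blockStart (k + 1), blockStart_succ_eq_ite, if_pos hk]
  · have h := hu.occursAt_phiL k
    rw [phiL_of_not_lt hk] at h
    simp only [occursAt_cons] at h
    exact h.2.2.1

theorem apply_of_add_one_eq_blockStart (hu : IsPhiFixed d u)
    (h : n + 1 = blockStart d u (k + 1)) : u n = min (u k + 1) (d - 1) := by
  rw [blockStart_succ_eq_ite] at h
  split_ifs at h with hk
  · rw [← hu.apply_blockStart_add_one k]
    congr 1
    omega
  · have hlast := hu.apply_blockStart_add_two k
    rw [if_neg hk] at hlast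
    rw [show n = blockStart d u k + 2 by omega, hlast]
    omega

theorem apply_lt (hu : IsPhiFixed d u) (hd : 0 < d) (n : ℕ) : u n < d := by
  obtain ⟨k, rfl | rfl | ⟨rfl, hk⟩⟩ := exists_eq_blockStart_add d u n
  · rwa [hu.apply_blockStart]
  · rw [hu.apply_blockStart_add_one]
    omega
  · rw [hu.apply_blockStart_add_two, if_neg hk]
    omega

theorem lt_of_mem_occursAt (hu : IsPhiFixed d u) (hd : 0 < d) (h : OccursAt w u j)
    (hx : x ∈ w) : x < d := by
  obtain ⟨t, ht, rfl⟩ := List.getElem_of_mem hx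
  rw [occursAt_iff_getElem.1 h t ht]
  exact hu.apply_lt hd _

theorem exists_eq_blockStart (hu : IsPhiFixed d u) (hd : 2 ≤ d) (hn : u n = 0) :
    ∃ k, n = blockStart d u k := by
  obtain ⟨k, h | rfl | ⟨rfl, hk⟩⟩ := exists_eq_blockStart_add d u n
  · exact ⟨k, h⟩
  · rw [hu.apply_blockStart_add_one] at hn
    omega
  · rw [hu.apply_blockStart_add_two, if_neg hk] at hn
    omega

theorem exists_add_one_eq_blockStart (hu : IsPhiFixed d u) (hd : 2 ≤ d) (hn : u (n + 1) = 0) :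
    ∃ k, n + 1 = blockStart d u (k + 1) := by
  obtain ⟨_ | k, hk⟩ := hu.exists_eq_blockStart hd hn
  · simp [blockStart_zero] at hk
  · exact ⟨k, hk⟩

theorem apply_add_one_eq_zero (hu : IsPhiFixed d u) (h₀ : u n ≠ 0) (hlt : u n < d - 1) :
    u (n + 1) = 0 := by
  obtain ⟨k, rfl | rfl | ⟨rfl, hk⟩⟩ := exists_eq_blockStart_add d u n
  · exact absurd (hu.apply_blockStart k) h₀
  · rw [hu.apply_blockStart_add_one] at hlt
    rw [add_assoc, hu.apply_blockStart_add_two, if_pos (by omega)]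
  · rw [hu.apply_blockStart_add_two, if_neg hk] at hlt
    omega

theorem exists_apply_eq (hu : IsPhiFixed d u) (hx : x ≤ d - 1) : ∃ k, u k = x := by
  induction x with
  | zero => exact ⟨0, hu.1⟩
  | succ x ih =>
    obtain ⟨k, rfl⟩ := ih (by omega)
    exact ⟨_, (hu.apply_blockStart_add_one k).trans (by omega)⟩

theorem apply_eq_of_occursAt_phiL (hu : IsPhiFixed d u) (hx : x < d)
    (h : OccursAt (phiL d x ++ [0]) u (blockStart d u k)) : u k = x := by
  have hone := hu.apply_blockStart_add_one k
  have htwo := hu.apply_blockStart_add_two k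
  have hk := hu.apply_lt (by omega) k
  by_cases hxd : x < d - 1
  · simp only [phiL_of_lt hxd, List.cons_append, List.nil_append, occursAt_cons, add_assoc,
      Nat.reduceAdd] at h
    split_ifs at htwo <;> omega
  · simp only [phiL_of_not_lt hxd, List.cons_append, occursAt_cons, add_assoc,
      Nat.reduceAdd] at h
    split_ifs at htwo <;> omega

theorem occursAt_of_occursAt_phiW (hu : IsPhiFixed d u) (hw : ∀ x ∈ w, x < d)
    (h : OccursAt (phiW d w ++ [0]) u (blockStart d u k)) : OccursAt w u k := by
  induction w generalizing k with
  | nil => simp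
  | cons x w ih =>
    rw [phiW_cons, List.append_assoc, occursAt_append] at h
    have hk : u k = x := hu.apply_eq_of_occursAt_phiL (hw x (by simp))
      (occursAt_append.2 ⟨h.1, h.2.of_prefix (zero_prefix_phiW_append_zero d w)⟩)
    rw [occursAt_cons]
    refine ⟨hk, ih (fun y hy => hw y (by simp [hy])) ?_⟩
    rw [blockStart_succ, hk]
    exact h.2

theorem exists_occursAt_of_occursAt_phiW (hu : IsPhiFixed d u) (hd : 2 ≤ d)
    (hw : ∀ x ∈ w, x < d) (h : OccursAt (phiW d w ++ [0]) u n) :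
    ∃ k, n = blockStart d u k ∧ OccursAt w u k := by
  obtain ⟨k, rfl⟩ := hu.exists_eq_blockStart hd
    (occursAt_cons.1 (h.of_prefix (zero_prefix_phiW_append_zero d w))).1
  exact ⟨k, rfl, hu.occursAt_of_occursAt_phiW hw h⟩

end IsPhiFixed

end Blocks

section PalindromicPrefixes

variable {d : ℕ} {u : ℕ → ℕ} {w r : List ℕ} {k : ℕ}

theorem reverse_Fword (d n : ℕ) : (Fword d n).reverse = Fword d n := by
  induction n with
  | zero => rfl
  | succ n ih => rw [Fword, reverse_phiW_append_zero, ih]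

theorem le_length_Fword (d n : ℕ) : n ≤ (Fword d n).length := by
  induction n with
  | zero => simp
  | succ n ih =>
    simpa [Fword] using ih.trans (length_le_length_phiW d (Fword d n))

namespace IsPhiFixed

theorem occursAt_phiW_append_zero (hu : IsPhiFixed d u) (h : OccursAt w u k) :
    OccursAt (phiW d w ++ [0]) u (blockStart d u k) := by
  rw [occursAt_append, ← h.blockStart_add_length]
  simpa using ⟨hu.occursAt_phiW h, hu.apply_blockStart _⟩

theorem occursAt_Fword (hu : IsPhiFixed d u) (n : ℕ) : OccursAt (Fword d n) u 0 := by
  induction n with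
  | zero => exact occursAt_nil u 0
  | succ n ih => exact hu.occursAt_phiW_append_zero ih

theorem exists_pos_occursAt_Fword (hu : IsPhiFixed d u) (n : ℕ) :
    ∃ p, 0 < p ∧ OccursAt (Fword d n) u p := by
  induction n with
  | zero => exact ⟨1, one_pos, occursAt_nil u 1⟩
  | succ n ih =>
    obtain ⟨p, hp, h⟩ := ih
    exact ⟨blockStart d u p, hp.trans_le (strictMono_blockStart d u).le_apply,
      hu.occursAt_phiW_append_zero h⟩

theorem isFactorS_reverse (hu : IsPhiFixed d u) (h : IsFactorS w u) :
    IsFactorS w.reverse u := by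
  obtain ⟨j, hj⟩ := h
  have hF := hu.occursAt_Fword (j + w.length)
  have hinfix := hj.isInfix_of_occursAt_zero hF (le_length_Fword d _)
  rw [← List.reverse_infix, reverse_Fword] at hinfix
  exact IsFactorS.of_infix ⟨0, hF⟩ hinfix

theorem exists_pos_consecutive (hu : IsPhiFixed d u) (hr : ReturnWord u w r) :
    ∃ j ℓ, 0 < j ∧ Consecutive u w j ℓ ∧ r = window u j (ℓ - j) := by
  obtain ⟨j, ℓ, h, rfl⟩ := returnWord_iff.1 hr
  obtain ⟨p, hp, hFp⟩ := hu.exists_pos_occursAt_Fword (ℓ + w.length)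
  have hagree : ∀ t < ℓ + w.length, u (p + t) = u t := fun t ht => by
    rw [hFp.apply_add_eq (hu.occursAt_Fword _) (ht.trans_le (le_length_Fword d _)), zero_add]
  refine ⟨p + j, p + ℓ, by omega, h.shift hagree, ?_⟩
  rw [Nat.add_sub_add_left]
  refine List.map_congr_left fun t ht => ?_
  rw [List.mem_range] at ht
  rw [add_assoc, hagree _ (by omega)]

end IsPhiFixed

end PalindromicPrefixes

section SpecialFactors

variable {d : ℕ} {u : ℕ → ℕ} {w : List ℕ} {p q r n : ℕ}

/-- The suffix of `u` at `r` follows those at `p` and `q` as long as these two agree, and where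
they first differ its letter is at least the smaller of theirs. The lower bound is what makes the
notion stable under `φ`, since `φ(x)` and `φ(y)` share a letter more when `{x, y} = {d-2, d-1}`. -/
def Shadows (u : ℕ → ℕ) (p q r : ℕ) : Prop :=
  ∀ n, (∀ t < n, u (p + t) = u (q + t)) →
    min (u (p + n)) (u (q + n)) ≤ u (r + n) ∧ (u (p + n) = u (q + n) → u (r + n) = u (p + n))

namespace Shadows

theorem refl_left (u : ℕ → ℕ) (p q : ℕ) : Shadows u p q p :=
  fun _ _ => ⟨min_le_left _ _, fun _ => rfl⟩

theorem refl_right (u : ℕ → ℕ) (p q : ℕ) : Shadows u p q q :=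
  fun _ _ => ⟨min_le_right _ _, Eq.symm⟩

theorem of_ne (hne : u p ≠ u q) (hr : min (u p) (u q) ≤ u r) : Shadows u p q r := by
  rintro (_ | n) hn
  · exact ⟨hr, fun h => absurd h hne⟩
  · exact absurd (hn 0 n.succ_pos) hne

theorem cons (hq : u q = u p) (hr : u r = u p) (h : Shadows u (p + 1) (q + 1) (r + 1)) :
    Shadows u p q r := by
  rintro (_ | n) hn
  · simp [hq, hr]
  · simpa only [add_assoc, add_comm 1] using
      h n fun t ht => by simpa only [add_assoc, add_comm 1] using hn (t + 1) (by omega)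

theorem tail (h : Shadows u p q r) (hq : u p = u q) : Shadows u (p + 1) (q + 1) (r + 1) := by
  intro n hn
  simp only [add_assoc, add_comm 1] at hn ⊢
  refine h (n + 1) fun t ht => ?_
  cases t with
  | zero => exact hq
  | succ t => exact hn t (by omega)

theorem apply_add_eq (h : Shadows u p q r) (hn : ∀ t < n, u (p + t) = u (q + t)) :
    ∀ t < n, u (r + t) = u (p + t) :=
  fun t ht => (h t fun s hs => hn s (hs.trans ht)).2 (hn t ht)

theorem image_of_ne (hu : IsPhiFixed d u) (hd : 0 < d) (hne : u p ≠ u q)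
    (hr : min (u p) (u q) ≤ u r) :
    Shadows u (blockStart d u p) (blockStart d u q) (blockStart d u r) := by
  have hp₁ := hu.apply_blockStart_add_one p
  have hq₁ := hu.apply_blockStart_add_one q
  have hr₁ := hu.apply_blockStart_add_one r
  have hpd := hu.apply_lt hd p
  have hqd := hu.apply_lt hd q
  refine cons (by simp only [hu.apply_blockStart]) (by simp only [hu.apply_blockStart]) ?_
  by_cases h₁ : u (blockStart d u p + 1) = u (blockStart d u q + 1)
  · refine cons h₁.symm (by omega) (of_ne ?_ ?_) <;>
      simp only [add_assoc, Nat.reduceAdd, hu.apply_blockStart_add_two] <;>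
      split_ifs <;> omega
  · exact of_ne h₁ (by omega)

theorem image (hu : IsPhiFixed d u) (hd : 0 < d) (h : Shadows u p q r) :
    Shadows u (blockStart d u p) (blockStart d u q) (blockStart d u r) := by
  intro n
  induction n using Nat.strong_induction_on generalizing p q r with
  | _ n ih =>
  by_cases hpq : u p = u q
  swap
  · exact image_of_ne hu hd hpq (h 0 (by simp)).1 n
  have hrp : u r = u p := (h 0 (by simp)).2 hpq
  intro hn
  have hp := hu.occursAt_phiL p
  have hq := hu.occursAt_phiL q
  have hr := hu.occursAt_phiL r
  have hpsucc := blockStart_succ d u p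
  have hqsucc := blockStart_succ d u q
  have hrsucc := blockStart_succ d u r
  rw [← hpq] at hq hqsucc
  rw [hrp] at hr hrsucc
  by_cases hlen : n < (phiL d (u p)).length
  · rw [hq.apply_add_eq hp hlen, hr.apply_add_eq hp hlen]
    simp
  · obtain ⟨m, rfl⟩ := Nat.exists_eq_add_of_le (not_lt.1 hlen)
    have hpos : 0 < (phiL d (u p)).length := by
      have := strictMono_blockStart d u (Nat.lt_add_one p)
      omega
    simp only [← add_assoc, ← hpsucc, ← hqsucc, ← hrsucc]
    refine ih m (by omega) (h.tail hpq) fun t ht => ?_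
    simpa only [hpsucc, hqsucc, add_assoc] using hn ((phiL d (u p)).length + t) (by omega)

end Shadows

namespace IsPhiFixed

theorem exists_shadows (hu : IsPhiFixed d u) (hd : 2 ≤ d) (hpq : u p ≠ u q) :
    ∃ r, u r = d - 1 ∧ Shadows u (p + 1) (q + 1) (r + 1) := by
  induction p using Nat.strong_induction_on generalizing q with
  | _ p ih =>
  by_cases hp : u p = d - 1
  · exact ⟨p, hp, Shadows.refl_left u _ _⟩
  by_cases hq : u q = d - 1
  · exact ⟨q, hq, Shadows.refl_right u _ _⟩
  by_cases hzero : u (p + 1) = 0 ∧ u (q + 1) = 0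
  · obtain ⟨k, hk⟩ := hu.exists_add_one_eq_blockStart hd hzero.1
    obtain ⟨l, hl⟩ := hu.exists_add_one_eq_blockStart hd hzero.2
    have huk := hu.apply_of_add_one_eq_blockStart hk
    have hul := hu.apply_of_add_one_eq_blockStart hl
    have hkp := two_mul_le_blockStart d u (k + 1)
    obtain ⟨r, hr, hshadow⟩ := ih k (by omega) (show u k ≠ u l by omega)
    have hlast : blockStart d u (r + 1) - 1 + 1 = blockStart d u (r + 1) := by
      have := two_mul_le_blockStart d u (r + 1)
      omega
    refine ⟨blockStart d u (r + 1) - 1, ?_, ?_⟩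
    · rw [hu.apply_of_add_one_eq_blockStart hlast, hr]
      omega
    · rw [hk, hl, hlast]
      exact hshadow.image hu (by omega)
  · have hpd := hu.apply_lt (by omega) p
    have hqd := hu.apply_lt (by omega) q
    have hone : u (p + 1) = 0 ∨ u (q + 1) = 0 := by
      by_cases hp₀ : u p = 0
      · exact .inr (hu.apply_add_one_eq_zero (by omega) (by omega))
      · exact .inl (hu.apply_add_one_eq_zero hp₀ (by omega))
    obtain ⟨r, hr⟩ := hu.exists_apply_eq le_rfl
    exact ⟨r, hr, Shadows.of_ne (by omega) (by omega)⟩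

theorem isFactorS_last_cons (hu : IsPhiFixed d u) (hd : 2 ≤ d) {i j : ℕ} (hij : i ≠ j)
    (hi : IsFactorS (i :: w) u) (hj : IsFactorS (j :: w) u) : IsFactorS ((d - 1) :: w) u := by
  obtain ⟨p, hp⟩ := hi
  obtain ⟨q, hq⟩ := hj
  rw [occursAt_cons] at hp hq
  obtain ⟨r, hr, hshadow⟩ := hu.exists_shadows hd (p := p) (q := q) (by rwa [hp.1, hq.1])
  have hagree := hshadow.apply_add_eq fun t ht => hp.2.apply_add_eq hq.2 ht
  exact ⟨r, occursAt_cons.2 ⟨hr, hp.2.congr hagree⟩⟩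

theorem isFactorS_append_last (hu : IsPhiFixed d u) (hd : 2 ≤ d) {i j : ℕ} (hij : i ≠ j)
    (hi : IsFactorS (w ++ [i]) u) (hj : IsFactorS (w ++ [j]) u) :
    IsFactorS (w ++ [d - 1]) u := by
  have hrev := hu.isFactorS_last_cons hd hij (w := w.reverse)
    (by simpa using hu.isFactorS_reverse hi) (by simpa using hu.isFactorS_reverse hj)
  simpa using hu.isFactorS_reverse hrev

end IsPhiFixed

end SpecialFactors

section Extensions

variable {d : ℕ} {u : ℕ → ℕ} {w : List ℕ} {a b i : ℕ}

theorem eq_or_eq_of_ncard_eq_two {α : Type*} {S : Set α} {x y z : α} (hS : S.ncard = 2)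
    (hx : x ∈ S) (hy : y ∈ S) (hxy : x ≠ y) (hz : z ∈ S) : z = x ∨ z = y := by
  by_contra! h
  have hfin : S.Finite := Set.finite_of_ncard_pos (by omega)
  have := (Set.two_lt_ncard hfin).2 ⟨x, hx, y, hy, z, hz, hxy, h.1.symm, h.2.symm⟩
  omega

theorem IsPhiFixed.left_extension_eq (hu : IsPhiFixed d u) (ha : a < d - 1)
    (hL : (Lext u w).ncard = 2) (haw : IsFactorS (a :: w) u) (hi : IsFactorS (i :: w) u) :
    i = a ∨ i = d - 1 := by
  rw [or_iff_not_imp_left]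
  intro hia
  have hlast := hu.isFactorS_last_cons (by omega) hia hi haw
  simpa [hia] using eq_or_eq_of_ncard_eq_two hL (x := a :: w) (y := (d - 1) :: w)
    ⟨a, rfl, haw⟩ ⟨d - 1, rfl, hlast⟩ (by simp [ha.ne]) ⟨i, rfl, hi⟩

theorem IsPhiFixed.right_extension_eq (hu : IsPhiFixed d u) (hb : b < d - 1)
    (hR : (Rext u w).ncard = 2) (hwb : IsFactorS (w ++ [b]) u) (hi : IsFactorS (w ++ [i]) u) :
    i = b ∨ i = d - 1 := by
  rw [or_iff_not_imp_left]
  intro hib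
  have hlast := hu.isFactorS_append_last (by omega) hib hi hwb
  simpa [hib] using eq_or_eq_of_ncard_eq_two hR (x := w ++ [b]) (y := w ++ [d - 1])
    ⟨b, rfl, hwb⟩ ⟨d - 1, rfl, hlast⟩ (by simp [hb.ne]) ⟨i, rfl, hi⟩

end Extensions

section Offspring

variable {d : ℕ} {u : ℕ → ℕ} {w s e : List ℕ} {a b i i' j k ℓ : ℕ}

theorem longest_common_suffix_eq (ha : a < d - 1)
    (hsa : s <:+ phiW d [a]) (hsd : s <:+ phiW d [d - 1])
    (hmax : ∀ t : List ℕ, t <:+ phiW d [a] → t <:+ phiW d [d - 1] → t <:+ s) :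
    s = if a = d - 2 then [d - 1] else [] := by
  simp only [phiW_cons, phiW_nil, List.append_nil, phiL_of_lt ha,
    phiL_of_not_lt (lt_irrefl (d - 1))] at hsa hsd hmax
  simp only [List.suffix_cons_iff, List.suffix_nil] at hsa hsd
  split_ifs with h
  · have hsucc : a + 1 = d - 1 := by omega
    rw [hsucc] at hsa hmax
    have hlast : [d - 1] <:+ s := hmax _ ⟨[0], rfl⟩ ⟨[0, d - 1], rfl⟩
    rcases hsa with rfl | rfl | rfl
    · simp [show 0 ≠ d - 1 by omega] at hsd
    · rfl
    · simp at hlast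
  · have hsucc : a + 1 ≠ d - 1 := by omega
    rcases hsa with rfl | rfl | rfl
    · simp [hsucc] at hsd
    · simp [hsucc] at hsd
    · rfl

theorem offspring_tail_prefix_phiL {x : ℕ} (hb : b < d - 1) (hx : x = b ∨ x = d - 1) :
    0 :: (if b = d - 2 then [d - 1] else []) <+: phiL d x := by
  rcases hx with rfl | rfl
  · rw [phiL_of_lt hb]
    split_ifs with h
    · simp [show x + 1 = d - 1 by omega]
    · simp
  · rw [phiL_of_not_lt (lt_irrefl _)]
    split_ifs <;> simp

/-- Every occurrence of `w` in `u`, except possibly one at position `0`, is preceded by a letter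
whose image under `φ` ends with `s`. -/
def PrecededByImageSuffix (d : ℕ) (u : ℕ → ℕ) (w s : List ℕ) : Prop :=
  ∀ k, OccursAt w u (k + 1) → s <:+ phiL d (u k)

/-- Every occurrence of `w` in `u` is followed by a letter whose image under `φ` starts
with `e`. -/
def FollowedByImagePrefix (d : ℕ) (u : ℕ → ℕ) (w e : List ℕ) : Prop :=
  ∀ k, OccursAt w u k → e <+: phiL d (u (k + w.length))

namespace PrecededByImageSuffix

theorem exists_add_length_eq_blockStart (hs : PrecededByImageSuffix d u w s) (hk : 0 < k)
    (hw : OccursAt w u k) : ∃ i, i + s.length = blockStart d u k := by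
  obtain ⟨k, rfl⟩ := Nat.exists_eq_add_one.2 hk
  have hle := (hs k hw).length_le
  have hsucc := blockStart_succ d u k
  exact ⟨blockStart d u (k + 1) - s.length, by omega⟩

theorem occursAt (hs : PrecededByImageSuffix d u w s) (hu : IsPhiFixed d u) (hk : 0 < k)
    (hw : OccursAt w u k) (hi : i + s.length = blockStart d u k) : OccursAt s u i := by
  obtain ⟨k, rfl⟩ := Nat.exists_eq_add_one.2 hk
  obtain ⟨t, ht⟩ := hs k hw
  have hblock := hu.occursAt_phiL k
  rw [blockStart_succ, ← ht, List.length_append] at hi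
  rw [← ht, occursAt_append] at hblock
  rw [show i = blockStart d u k + t.length by omega]
  exact hblock.2

theorem occursAt_image (hs : PrecededByImageSuffix d u w s) (he : FollowedByImagePrefix d u w e)
    (hu : IsPhiFixed d u) (hk : 0 < k) (hw : OccursAt w u k)
    (hi : i + s.length = blockStart d u k) : OccursAt (s ++ (phiW d w ++ e)) u i := by
  rw [occursAt_append, occursAt_append, hi, ← hw.blockStart_add_length]
  exact ⟨hs.occursAt hu hk hw hi, hu.occursAt_phiW hw, (hu.occursAt_phiL _).of_prefix (he k hw)⟩

theorem consecutive_image (hs : PrecededByImageSuffix d u w s)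
    (he : FollowedByImagePrefix d u w (0 :: e)) (hu : IsPhiFixed d u) (hd : 2 ≤ d) (hj : 0 < j)
    (h : Consecutive u w j ℓ) (hi : i + s.length = blockStart d u j)
    (hi' : i' + s.length = blockStart d u ℓ) :
    Consecutive u (s ++ (phiW d w ++ 0 :: e)) i i' where
  lt := by
    have := strictMono_blockStart d u h.lt
    omega
  left := hs.occursAt_image he hu hj h.left hi
  right := hs.occursAt_image he hu (hj.trans h.lt) h.right hi'
  not_between m hm hm' hocc := by
    have hcore : OccursAt (phiW d w ++ [0]) u (m + s.length) :=
      (occursAt_append.1 hocc).2.of_prefix (by simp)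
    obtain ⟨k, hk, hw⟩ := hu.exists_occursAt_of_occursAt_phiW hd
      (fun x hx => hu.lt_of_mem_occursAt (by omega) h.left hx) hcore
    exact h.not_between k ((strictMono_blockStart d u).lt_iff_lt.1 (by omega))
      ((strictMono_blockStart d u).lt_iff_lt.1 (by omega)) hw

theorem window_append_eq (hs : PrecededByImageSuffix d u w s) (hu : IsPhiFixed d u) (hj : 0 < j)
    (h : Consecutive u w j ℓ) (hi : i + s.length = blockStart d u j)
    (hi' : i' + s.length = blockStart d u ℓ) :
    window u i (i' - i) ++ s = s ++ phiW d (window u j (ℓ - j)) := by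
  have hlt := strictMono_blockStart d u h.lt
  have hr := occursAt_window u j (ℓ - j)
  have hlen := hr.blockStart_add_length (d := d)
  rw [length_window, Nat.add_sub_cancel' h.lt.le] at hlen
  have hleft : OccursAt (window u i (i' - i) ++ s) u i := by
    rw [occursAt_append, length_window, Nat.add_sub_cancel' (by omega)]
    exact ⟨occursAt_window u i _, hs.occursAt hu (hj.trans h.lt) h.right hi'⟩
  have hright : OccursAt (s ++ phiW d (window u j (ℓ - j))) u i := by
    rw [occursAt_append, hi]
    exact ⟨hs.occursAt hu hj h.left hi, hu.occursAt_phiW hr⟩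
  refine hleft.eq_of_length_eq hright ?_
  simp only [List.length_append, length_window]
  omega

end PrecededByImageSuffix

namespace IsPhiFixed

theorem precededByImageSuffix (hu : IsPhiFixed d u) (ha : a < d - 1)
    (hL : (Lext u w).ncard = 2) (haw : IsFactorS (a :: w) u)
    (hsa : s <:+ phiW d [a]) (hsd : s <:+ phiW d [d - 1]) : PrecededByImageSuffix d u w s := by
  intro k hk
  have hext : IsFactorS (u k :: w) u := ⟨k, occursAt_cons.2 ⟨rfl, hk⟩⟩
  obtain h | h := hu.left_extension_eq ha hL haw hext
  · simpa [h] using hsa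
  · simpa [h] using hsd

theorem followedByImagePrefix (hu : IsPhiFixed d u) (hb : b < d - 1)
    (hR : (Rext u w).ncard = 2) (hwb : IsFactorS (w ++ [b]) u) :
    FollowedByImagePrefix d u w (0 :: if b = d - 2 then [d - 1] else []) := by
  intro k hk
  have hext : IsFactorS (w ++ [u (k + w.length)]) u := ⟨k, by simp [occursAt_append, hk]⟩
  exact offspring_tail_prefix_phiL hb (hu.right_extension_eq hb hR hwb hext)

end IsPhiFixed

end Offspring

theorem statement13_general (d : ℕ) (u : ℕ → ℕ) (hu : IsPhiFixed d u)
    (a b : ℕ) (w : List ℕ) (ht : TripleMem d u (a, w, b))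
    (hL : (Lext u w).ncard = 2) (hR : (Rext u w).ncard = 2)
    (r : List ℕ) (hr : ReturnWord u w r)
    (s : List ℕ) (hs1 : s <:+ phiW d [a]) (hs2 : s <:+ phiW d [d - 1])
    (hs3 : ∀ t : List ℕ, t <:+ phiW d [a] → t <:+ phiW d [d - 1] → t <:+ s) :
    ∃ r' : List ℕ, r' ++ s = s ++ phiW d r ∧
      ReturnWord u (fmap d (a, w, b)).2.1 r' ∧
      parikh d r' = (Mmat d).mulVec (parikh d r) := by
  obtain ⟨-, ha : a < d - 1, hb, haw, hwb⟩ := ht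
  have hleft := hu.precededByImageSuffix ha hL haw hs1 hs2
  have hright := hu.followedByImagePrefix hb hR hwb
  obtain ⟨j, ℓ, hj, hjℓ, rfl⟩ := hu.exists_pos_consecutive hr
  obtain ⟨i, hi⟩ := hleft.exists_add_length_eq_blockStart hj hjℓ.left
  obtain ⟨i', hi'⟩ := hleft.exists_add_length_eq_blockStart (hj.trans hjℓ.lt) hjℓ.right
  have hconj := hleft.window_append_eq hu hj hjℓ hi hi'
  have hreturn := hleft.consecutive_image hright hu (by omega) hj hjℓ hi hi'
  have hoffspring : (fmap d (a, w, b)).2.1 =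
      s ++ (phiW d w ++ 0 :: if b = d - 2 then [d - 1] else []) := by
    simp [fmap, longest_common_suffix_eq ha hs1 hs2 hs3]
  refine ⟨window u i (i' - i), hconj, ?_, ?_⟩
  · rw [hoffspring]
    exact returnWord_iff.2 ⟨i, i', hreturn, rfl⟩
  · have hperm : (window u i (i' - i)).Perm (phiW d (window u j (ℓ - j))) :=
      (List.perm_append_right_iff s).1 (hconj ▸ List.perm_append_comm)
    rw [parikh_eq_of_perm hperm, parikh_phiW fun x hx =>
      hu.lt_of_mem_occursAt (by omega) (occursAt_window u j _) hx]

/-- Let `d ≥ 3` and `(a,w,b) ∈ 𝒯` with `w` having exactly two left and two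
right extensions. Let `w′` be the offspring of `w` and `s` the longest common suffix of
`φ(a)` and `φ(d−1)`. If `r` is a return word to `w` in `u_d`, then `sφ(r)` has `s` as a
suffix and the word `r′` with `r′s = sφ(r)` is a return word to `w′` in `u_d`; its Parikh
vector equals `M r⃗`, where `M` is the incidence matrix of `φ_d`. -/
theorem statement13 (d : ℕ) (hd : 3 ≤ d) (u : ℕ → ℕ) (hu : IsPhiFixed d u)
    (a b : ℕ) (w : List ℕ) (ht : TripleMem d u (a, w, b))
    (hL : (Lext u w).ncard = 2) (hR : (Rext u w).ncard = 2)
    (r : List ℕ) (hr : ReturnWord u w r)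
    (s : List ℕ) (hs1 : s <:+ phiW d [a]) (hs2 : s <:+ phiW d [d - 1])
    (hs3 : ∀ t : List ℕ, t <:+ phiW d [a] → t <:+ phiW d [d - 1] → t <:+ s) :
    ∃ r' : List ℕ, r' ++ s = s ++ phiW d r ∧
      ReturnWord u (fmap d (a, w, b)).2.1 r' ∧
      parikh d r' = (Mmat d).mulVec (parikh d r) :=
  statement13_general d u hu a b w ht hL hR r hr s hs1 hs2 hs3

end RichRT
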